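/- Assume E₀, U, L, K satisfy the hypothesis and let A be the operator with domain D(A) = {(u,w) ∈ E₀ × H : K^⋄Ku − L^⋄w ∈ E}. Define h := {(x,y) ∈ BD(G) ⊕ BD(G) : π*_{BD(G)}x ∈ E₀ and K^⋄Kπ*_{BD(G)}x − L^⋄π*_{BD(D)}Ġy ∈ E}. Then (u,w) ∈ D(A) if and only if (u,w) ∈ D(G) × D(D) and (π_{BD(G)}u, Ḋπ_{BD(D)}w) ∈ h. -/

import Mathlib

open scoped ComplexInnerProductSpace
open Filter Topology Classical

noncomputable section

variable {E H : Type*}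
  [NormedAddCommGroup E] [InnerProductSpace ℂ E] [CompleteSpace E]
  [NormedAddCommGroup H] [InnerProductSpace ℂ H] [CompleteSpace H]

/-- The operator `G := (−D₀)*`. -/
def Gop (D₀ : H →ₗ.[ℂ] E) : E →ₗ.[ℂ] H := (-D₀).adjoint

/-- The operator `D := −(G₀)*`. -/
def Dop (G₀ : E →ₗ.[ℂ] H) : H →ₗ.[ℂ] E := -(G₀.adjoint)

/-- Pointwise application of `G`, defined to be `0` off the domain. -/
def Gap (D₀ : H →ₗ.[ℂ] E) (u : E) : H :=
  if h : u ∈ (Gop D₀).domain then Gop D₀ ⟨u, h⟩ else 0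

/-- Pointwise application of `D`, defined to be `0` off the domain. -/
def Dap (G₀ : E →ₗ.[ℂ] H) (w : H) : E :=
  if h : w ∈ (Dop G₀).domain then Dop G₀ ⟨w, h⟩ else 0

/-- The graph inner product of `D_G`: `⟪x,y⟫_E + ⟪Gx,Gy⟫_H`. -/
def innG (D₀ : H →ₗ.[ℂ] E) (x y : E) : ℂ := ⟪x, y⟫ + ⟪Gap D₀ x, Gap D₀ y⟫

/-- The graph inner product of `D_D`: `⟪x,y⟫_H + ⟪Dx,Dy⟫_E`. -/
def innD (G₀ : E →ₗ.[ℂ] H) (x y : H) : ℂ := ⟪x, y⟫ + ⟪Dap G₀ x, Dap G₀ y⟫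

/-- The boundary data space `BD(G)`, the orthogonal complement of `D(G₀)` in `D_G`. -/
def BDG (G₀ : E →ₗ.[ℂ] H) (D₀ : H →ₗ.[ℂ] E) : Set E :=
  {u | u ∈ (Gop D₀).domain ∧ ∀ v ∈ G₀.domain, innG D₀ u v = 0}

/-- The boundary data space `BD(D)`, the orthogonal complement of `D(D₀)` in `D_D`. -/
def BDD (G₀ : E →ₗ.[ℂ] H) (D₀ : H →ₗ.[ℂ] E) : Set H :=
  {w | w ∈ (Dop G₀).domain ∧ ∀ v ∈ D₀.domain, innD G₀ w v = 0}

variable {U E₀ : Type*}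
  [NormedAddCommGroup U] [InnerProductSpace ℂ U] [CompleteSpace U]
  [NormedAddCommGroup E₀] [InnerProductSpace ℂ E₀] [CompleteSpace E₀]

/-- Closedness of the operator `(L,K) : E₀ ⊆ E → H ⊕ U`: whenever `wₙ` in `E₀` with `wₙ → w`
in `E`, `Lwₙ → v` in `H` and `Kwₙ → z` in `U`, then `w ∈ E₀`, `Lw = v` and `Kw = z`. -/
def ClosedLK (j : E₀ →L[ℂ] E) (L : E₀ →L[ℂ] H) (K : E₀ →L[ℂ] U) : Prop :=
  ∀ (f : ℕ → E₀) (w : E) (v : H) (z : U),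
    Tendsto (fun n => j (f n)) atTop (nhds w) →
    Tendsto (fun n => L (f n)) atTop (nhds v) →
    Tendsto (fun n => K (f n)) atTop (nhds z) →
    ∃ w₀ : E₀, j w₀ = w ∧ L w₀ = v ∧ K w₀ = z

/-- The boundary relation `h` associated with `A`:
`h = {(x,y) ∈ BD(G) ⊕ BD(G) : π*x ∈ E₀, K^⋄Kπ*x − L^⋄π*Ġy ∈ E}`. -/
def hRel (G₀ : E →ₗ.[ℂ] H) (D₀ : H →ₗ.[ℂ] E) (j : E₀ →L[ℂ] E) (L : E₀ →L[ℂ] H)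
    (K : E₀ →L[ℂ] U) : Set (E × E) :=
  {p | p.1 ∈ BDG G₀ D₀ ∧ p.2 ∈ BDG G₀ D₀ ∧
    ∃ x₀ : E₀, j x₀ = p.1 ∧
      ∃ e : E, ∀ z : E₀, (⟪e, j z⟫ : ℂ) = ⟪K x₀, K z⟫ - ⟪Gap D₀ p.2, L z⟫}

/-- Duality relation for `G`. -/
theorem gap_inner (D₀ : H →ₗ.[ℂ] E) (hd : Dense (D₀.domain : Set H)) (u : E)
    (hu : u ∈ (Gop D₀).domain) (v : D₀.domain) :
    (⟪Gap D₀ u, (v : H)⟫ : ℂ) = -⟪u, D₀ v⟫ := by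
  have hdn : Dense ((-D₀).domain : Set H) := hd
  have h := LinearPMap.adjoint_isFormalAdjoint hdn ⟨u, hu⟩ v
  rw [Gap, dif_pos hu]
  refine h.trans ?_
  rw [LinearPMap.neg_apply, inner_neg_right]

theorem gap_of (D₀ : H →ₗ.[ℂ] E) (hd : Dense (D₀.domain : Set H)) (u : E) (g : H)
    (h : ∀ v : D₀.domain, (⟪g, (v : H)⟫ : ℂ) = -⟪u, D₀ v⟫) :
    u ∈ (Gop D₀).domain ∧ Gap D₀ u = g := by
  have hdn : Dense ((-D₀).domain : Set H) := hd
  have hform : ∀ v : (-D₀).domain, (⟪g, (v : H)⟫ : ℂ) = ⟪u, (-D₀) v⟫ := by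
    intro v
    rw [LinearPMap.neg_apply, inner_neg_right]
    exact h v
  have hm : u ∈ (Gop D₀).domain := LinearPMap.mem_adjoint_domain_of_exists u ⟨g, hform⟩
  refine ⟨hm, ?_⟩
  rw [Gap, dif_pos hm]
  exact LinearPMap.adjoint_apply_eq hdn ⟨u, hm⟩ hform

/-- Duality relation for `D`. -/
theorem dap_inner (G₀ : E →ₗ.[ℂ] H) (hd : Dense (G₀.domain : Set E)) (w : H)
    (hw : w ∈ (Dop G₀).domain) (v : G₀.domain) :
    (⟪Dap G₀ w, (v : E)⟫ : ℂ) = -⟪w, G₀ v⟫ := by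
  have h := LinearPMap.adjoint_isFormalAdjoint hd ⟨w, hw⟩ v
  rw [Dap, dif_pos hw]
  refine (inner_neg_left _ _).trans ?_
  exact congrArg Neg.neg h

theorem dap_of (G₀ : E →ₗ.[ℂ] H) (hd : Dense (G₀.domain : Set E)) (w : H) (g : E)
    (h : ∀ v : G₀.domain, (⟪g, (v : E)⟫ : ℂ) = -⟪w, G₀ v⟫) :
    w ∈ (Dop G₀).domain ∧ Dap G₀ w = g := by
  have hform : ∀ v : G₀.domain, (⟪-g, (v : E)⟫ : ℂ) = ⟪w, G₀ v⟫ := by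
    intro v
    rw [inner_neg_left, h v, neg_neg]
  have hm : w ∈ (Dop G₀).domain := LinearPMap.mem_adjoint_domain_of_exists w ⟨-g, hform⟩
  refine ⟨hm, ?_⟩
  rw [Dap, dif_pos hm]
  have h2 : G₀.adjoint ⟨w, hm⟩ = -g := LinearPMap.adjoint_apply_eq hd ⟨w, hm⟩ hform
  exact neg_eq_iff_eq_neg.mpr h2

theorem gap_ext (G₀ : E →ₗ.[ℂ] H) (D₀ : H →ₗ.[ℂ] E) (hsub : G₀ ≤ Gop D₀) (v : G₀.domain) :
    Gap D₀ (v : E) = G₀ v := by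
  have hm := hsub.1 v.2
  rw [Gap, dif_pos hm]
  exact (hsub.2 (x := v) (y := ⟨v, hm⟩) rfl).symm

theorem dap_ext (G₀ : E →ₗ.[ℂ] H) (D₀ : H →ₗ.[ℂ] E) (hG : Dense (G₀.domain : Set E))
    (hD : Dense (D₀.domain : Set H)) (hsub : G₀ ≤ Gop D₀) (v : D₀.domain) :
    (v : H) ∈ (Dop G₀).domain ∧ Dap G₀ (v : H) = D₀ v := by
  refine dap_of G₀ hG _ _ fun x => ?_
  have h := gap_inner D₀ hD x (hsub.1 x.2) v
  rw [gap_ext G₀ D₀ hsub] at h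
  rw [← inner_conj_symm, ← inner_conj_symm (v : H), h]
  simp

/-- `Ḋ` maps `BD(D)` into `BD(G)` and `Ġ Ḋ = 1`. -/
theorem dap_bdd (G₀ : E →ₗ.[ℂ] H) (D₀ : H →ₗ.[ℂ] E) (hG : Dense (G₀.domain : Set E))
    (hD : Dense (D₀.domain : Set H)) (hsub : G₀ ≤ Gop D₀) (w : H) (hw : w ∈ BDD G₀ D₀) :
    Dap G₀ w ∈ BDG G₀ D₀ ∧ Gap D₀ (Dap G₀ w) = w := by
  obtain ⟨hw1, hw2⟩ := hw
  obtain ⟨h1, h2⟩ := gap_of D₀ hD (Dap G₀ w) w (by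
    intro v
    have h := hw2 v v.2
    rw [innD, (dap_ext G₀ D₀ hG hD hsub v).2] at h
    exact eq_neg_of_add_eq_zero_left h)
  refine ⟨⟨h1, fun v hv => ?_⟩, h2⟩
  rw [innG, h2, gap_ext G₀ D₀ hsub ⟨v, hv⟩, dap_inner G₀ hG w hw1 ⟨v, hv⟩]
  simp

/-- [Trostorff 2015, Lemma 3.3]: `(u,w) ∈ D(A)`, i.e. `(u,w) ∈ E₀ × H` with
`K^⋄Ku − L^⋄w ∈ E`, if and only if `(u,w) ∈ D(G) × D(D)` and
`(π_{BD(G)}u, Ḋπ_{BD(D)}w) ∈ h`. -/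
theorem mem_domA_iff_boundary (G₀ : E →ₗ.[ℂ] H) (D₀ : H →ₗ.[ℂ] E)
    (hG₀dense : Dense (G₀.domain : Set E)) (hD₀dense : Dense (D₀.domain : Set H))
    (hG₀closed : G₀.IsClosed) (hD₀closed : D₀.IsClosed)
    (hsub : G₀ ≤ Gop D₀)
    (j : E₀ →L[ℂ] E) (L : E₀ →L[ℂ] H) (K : E₀ →L[ℂ] U)
    (hj_inj : Function.Injective j) (hj_dense : DenseRange j)
    (hclosed : ClosedLK j L K)
    (hLsubG : ∀ x : E₀, j x ∈ (Gop D₀).domain ∧ L x = Gap D₀ (j x))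
    (hG₀subL : ∀ u ∈ G₀.domain, ∃ x : E₀, j x = u)
    (hK0 : ∀ x : E₀, j x ∈ G₀.domain → K x = 0)
    -- the orthogonal projections onto the boundary data spaces
    (PG : E → E) (PD : H → H)
    (hPG : ∀ u ∈ (Gop D₀).domain, PG u ∈ BDG G₀ D₀ ∧ u - PG u ∈ G₀.domain)
    (hPD : ∀ w ∈ (Dop G₀).domain, PD w ∈ BDD G₀ D₀ ∧ w - PD w ∈ D₀.domain) :
    ∀ (u : E) (w : H),
      (∃ u₀ : E₀, j u₀ = u ∧
          ∃ e : E, ∀ x : E₀, (⟪e, j x⟫ : ℂ) = ⟪K u₀, K x⟫ - ⟪w, L x⟫) ↔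
        (u ∈ (Gop D₀).domain ∧ w ∈ (Dop G₀).domain ∧
          (PG u, Dap G₀ (PD w)) ∈ hRel G₀ D₀ j L K) := by
  intro u w
  -- pairing with `L` against elements of `D(D₀)`
  have key : ∀ (d : D₀.domain) (z : E₀), (⟪(d : H), L z⟫ : ℂ) = -⟪D₀ d, j z⟫ := by
    intro d z
    obtain ⟨hz, hL⟩ := hLsubG z
    have h := gap_inner D₀ hD₀dense (j z) hz d
    rw [hL, ← inner_conj_symm, h, map_neg, inner_conj_symm]
  constructor
  · rintro ⟨u₀, rfl, e, he⟩
    have hu := (hLsubG u₀).1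
    have hw : w ∈ (Dop G₀).domain := by
      refine (dap_of G₀ hG₀dense w e fun v => ?_).1
      obtain ⟨x, hx⟩ := hG₀subL v v.2
      have h := he x
      rw [hK0 x (hx ▸ v.2), (hLsubG x).2, hx, gap_ext G₀ D₀ hsub] at h
      simpa using h
    obtain ⟨hP1, hP2⟩ := hPG _ hu
    obtain ⟨hQ1, hQ2⟩ := hPD _ hw
    obtain ⟨hB1, hB2⟩ := dap_bdd G₀ D₀ hG₀dense hD₀dense hsub _ hQ1
    obtain ⟨a, ha⟩ := hG₀subL _ hP2
    refine ⟨hu, hw, hP1, hB1, u₀ - a, by rw [map_sub, ha]; simp, e - D₀ ⟨_, hQ2⟩, fun z => ?_⟩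
    have hk := key ⟨_, hQ2⟩ z
    simp only [inner_sub_left] at hk
    simp only [hB2, map_sub, hK0 a (ha ▸ hP2), sub_zero, inner_sub_left, he z]
    linear_combination -hk
  · rintro ⟨hu, hw, -, -, x₀, hx₀, e, he⟩
    obtain ⟨hP1, hP2⟩ := hPG _ hu
    obtain ⟨hQ1, hQ2⟩ := hPD _ hw
    obtain ⟨hB1, hB2⟩ := dap_bdd G₀ D₀ hG₀dense hD₀dense hsub _ hQ1
    obtain ⟨a, ha⟩ := hG₀subL _ hP2
    refine ⟨x₀ + a, by rw [map_add, ha, hx₀]; simp, e + D₀ ⟨_, hQ2⟩, fun z => ?_⟩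
    have hk := key ⟨_, hQ2⟩ z
    have hz := he z
    simp only [hB2] at hz
    simp only [inner_sub_left] at hk
    simp only [map_add, hK0 a (ha ▸ hP2), add_zero, inner_add_left, hz]
    linear_combination hk
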